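/- arXiv:2111.04166 — 2 statements merged into one kernel-verified Lean document; each statement's English description precedes it below -/
import Mathlib

section
/- Let q be a prime power not divisible by 3 and let n > 1 be an integer. If q ≡ 1 (mod 3), then |𝓘(x^3, 1, n, q)| = (2/(3 n_3)) (I(n/n_3, q^{n_3}) − I(n/n_3, 1)). If q ≡ −1 (mod 3), then |𝓘(x^3, 1, n, q)| = (1/(3 n_3)) (I(n/(2n_3), q^{2 n_3}) − I(n/(2n_3), 1)). -/
open Polynomial

/-- The transform `f_R` of a nonzero polynomial `f` by the rational expression `R = g/h`. -/
noncomputable def ratTransform {K : Type*} [Field K] (g h f : K[X]) : K[X] :=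
  ∑ i ∈ Finset.range (f.natDegree + 1), C (f.coeff i) * g ^ i * h ^ (f.natDegree - i)

/-- `𝓘(g,h,n,q)`: the set of monic irreducible polynomials `f` of degree `n` over the field
such that `f_R` is irreducible. -/
noncomputable def IrredSet {K : Type*} [Field K] (g h : K[X]) (n : ℕ) : Set K[X] :=
  {f | f.Monic ∧ Irreducible f ∧ f.natDegree = n ∧ Irreducible (ratTransform g h f)}

/-- `I(n,q) = (1/n) ∑_{d ∣ n} μ(d) q^{n/d}`, used formally for any rational `q`. -/
noncomputable def Ifun (n : ℕ) (q : ℚ) : ℚ :=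
  (1 / (n : ℚ)) * ∑ d ∈ n.divisors, ((ArithmeticFunction.moebius d : ℤ) : ℚ) * q ^ (n / d)

/-- `I(n/m, q)` with the convention that it is `0` when `m` does not divide `n`
(i.e. when `n/m` is not a positive integer). -/
noncomputable def IfunD (n m : ℕ) (q : ℚ) : ℚ := if m ∣ n then Ifun (n / m) q else 0

/-- `n₃`: the largest power of `3` dividing `n`. -/
def nThree (n : ℕ) : ℕ := 3 ^ (n.factorization 3)

/-!
By Capelli's lemma, if `a` is a root of the irreducible `f ∈ F_q[x]`, then `f(x^ℓ)` is irreducible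
if and only if `a` is not an `ℓ`-th power in `F_q(a)`. An `a` of degree `d` that is not an `ℓ`-th
power in `F_{q^d}` remains a non-power in `F_{q^N}`, for `d ∣ N`, exactly when `ℓ ∤ N/d`. Let `e` be
the order of `q` modulo `ℓ`, let `c = e ℓ^v`, and let `ℓ ∤ m`. If `F_{q^(cm)}` contains a non-power
of degree `d`, then `ℓ ∣ q^d - 1`, so `e ∣ d`, and `ℓ ∤ cm/d` gives `ℓ^v ∣ d`; hence `d = ck` with
`k ∣ m`. Since `ℓ ∣ q^(cm) - 1`, there are `(ℓ-1)/ℓ · (q^(cm) - 1)` non-powers in `F_{q^(cm)}`, and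
grouping them by minimal polynomial gives
`∑_{k ∣ m} ck |𝓘(x^ℓ, 1, ck, q)| = (ℓ-1)/ℓ · (q^(cm) - 1)`, which Möbius inversion solves for
`|𝓘(x^ℓ, 1, cm, q)|`.
-/

section NonPowers

/-- The elements `a` with `a ^ Q = a` that are not the `ℓ`-th power of an element `b` with
`b ^ Q = b`. When `K` is an algebraic closure of a finite field and `Q` is the cardinality of a
subfield of `K`, these are the elements of that subfield that are not `ℓ`-th powers in it. -/
def nonPowers (K : Type*) [Monoid K] (ℓ Q : ℕ) : Set K :=
  {a | a ^ Q = a ∧ ∀ b, b ^ Q = b → b ^ ℓ ≠ a}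

variable {K : Type*} [Field K] {ℓ Q : ℕ} {a : K}

theorem pow_eq_self_iff_pow_sub_one_eq_one (ha : a ≠ 0) (hQ : Q ≠ 0) :
    a ^ Q = a ↔ a ^ (Q - 1) = 1 := by
  rw [← mul_pow_sub_one hQ a, mul_eq_left₀ ha]

theorem ne_zero_of_mem_nonPowers (hℓ : ℓ ≠ 0) (hQ : Q ≠ 0) (ha : a ∈ nonPowers K ℓ Q) : a ≠ 0 := by
  rintro rfl
  exact ha.2 0 (zero_pow hQ) (zero_pow hℓ)

theorem dvd_sub_one_of_mem_nonPowers (hℓ : ℓ.Prime) (hQ : Q ≠ 0) (ha : a ∈ nonPowers K ℓ Q) :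
    ℓ ∣ Q - 1 := by
  by_contra hdvd
  have horder : orderOf a ∣ Q - 1 := orderOf_dvd_of_pow_eq_one <|
    (pow_eq_self_iff_pow_sub_one_eq_one (ne_zero_of_mem_nonPowers hℓ.ne_zero hQ ha) hQ).1 ha.1
  obtain ⟨m, hm⟩ := exists_pow_eq_self_of_coprime
    (((hℓ.coprime_iff_not_dvd).2 hdvd).coprime_dvd_right horder)
  refine ha.2 (a ^ m) ?_ ?_
  · rw [pow_right_comm, ha.1]
  · rwa [pow_right_comm]

theorem nonPowers_eq_empty (hℓ : ℓ.Prime) (hQ : Q ≠ 0) (h : ¬ ℓ ∣ Q - 1) :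
    nonPowers K ℓ Q = ∅ :=
  Set.eq_empty_of_forall_notMem fun _ ha => h (dvd_sub_one_of_mem_nonPowers hℓ hQ ha)

variable [IsAlgClosed K]

theorem mem_nonPowers_iff (hℓ : ℓ ≠ 0) (hQ : Q ≠ 0) (h : ℓ ∣ Q - 1) :
    a ∈ nonPowers K ℓ Q ↔ a ^ (Q - 1) = 1 ∧ a ^ ((Q - 1) / ℓ) ≠ 1 := by
  constructor
  · intro ha
    have ha0 := ne_zero_of_mem_nonPowers hℓ hQ ha
    refine ⟨(pow_eq_self_iff_pow_sub_one_eq_one ha0 hQ).1 ha.1, fun hpow => ?_⟩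
    obtain ⟨b, rfl⟩ := IsAlgClosed.exists_pow_nat_eq a (Nat.pos_of_ne_zero hℓ)
    rw [← pow_mul, Nat.mul_div_cancel' h] at hpow
    exact ha.2 b ((pow_eq_self_iff_pow_sub_one_eq_one (ne_zero_pow hℓ ha0) hQ).2 hpow) rfl
  · rintro ⟨hone, hne⟩
    have hQ1 : Q - 1 ≠ 0 := fun h0 => hne (by simp [h0])
    have ha0 : a ≠ 0 := by
      rintro rfl
      simp [hQ1] at hone
    refine ⟨(pow_eq_self_iff_pow_sub_one_eq_one ha0 hQ).2 hone, ?_⟩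
    rintro b hb rfl
    rw [← pow_mul, Nat.mul_div_cancel' h] at hne
    exact hne ((pow_eq_self_iff_pow_sub_one_eq_one (ne_zero_pow hℓ ha0) hQ).1 hb)

theorem geomSum_modEq_of_modEq_one (h : Q ≡ 1 [MOD ℓ]) (s : ℕ) :
    ∑ i ∈ Finset.range s, Q ^ i ≡ s [MOD ℓ] := by
  simpa using Nat.ModEq.sum fun i (_ : i ∈ Finset.range s) => h.pow i

/- With `ζ = a ^ ((Q - 1) / ℓ)`, a nontrivial `ℓ`-th root of unity, Euler's criterion for `Q ^ s`
asks whether `ζ ^ (1 + Q + ⋯ + Q ^ (s - 1)) = ζ ^ s` is nontrivial. -/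
theorem mem_nonPowers_pow_iff (hℓ : ℓ.Prime) (hQ : Q ≠ 0) (ha : a ∈ nonPowers K ℓ Q) (s : ℕ) :
    a ∈ nonPowers K ℓ (Q ^ s) ↔ ¬ ℓ ∣ s := by
  have hdvd := dvd_sub_one_of_mem_nonPowers hℓ hQ ha
  have hmod : Q ≡ 1 [MOD ℓ] := ((Nat.modEq_iff_dvd' (Nat.one_le_iff_ne_zero.2 hQ)).2 hdvd).symm
  obtain ⟨hone, hne⟩ := (mem_nonPowers_iff hℓ.ne_zero hQ hdvd).1 ha
  have hgeom : Q ^ s - 1 = (Q - 1) * ∑ i ∈ Finset.range s, Q ^ i := by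
    rw [mul_comm, geom_sum_mul_of_one_le (Nat.one_le_iff_ne_zero.2 hQ)]
  have horder : orderOf (a ^ ((Q - 1) / ℓ)) = ℓ := by
    have := Fact.mk hℓ
    exact orderOf_eq_prime (by rw [← pow_mul, Nat.div_mul_cancel hdvd, hone]) hne
  rw [mem_nonPowers_iff hℓ.ne_zero (pow_ne_zero s hQ) (hgeom ▸ hdvd.mul_right _), hgeom,
    pow_mul, hone, one_pow, ← Nat.div_mul_right_comm hdvd, pow_mul, Ne,
    ← orderOf_dvd_iff_pow_eq_one, horder, (geomSum_modEq_of_modEq_one hmod s).dvd_iff dvd_rfl]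
  simp

theorem card_nthRootsFinset_one {k : ℕ} (hk : (k : K) ≠ 0) :
    (nthRootsFinset k (1 : K)).card = k := by
  have : NeZero (k : K) := ⟨hk⟩
  obtain ⟨ζ, hζ⟩ := HasEnoughRootsOfUnity.exists_primitiveRoot K k
  exact hζ.card_nthRootsFinset

theorem ncard_nonPowers (hℓ : ℓ ≠ 0) (hQ : Q ≠ 0) (hQK : (Q : K) = 0) (h : ℓ ∣ Q - 1) :
    ℓ * (nonPowers K ℓ Q).ncard = (ℓ - 1) * (Q - 1) := by
  classical
  have hcast : ((Q - 1 : ℕ) : K) ≠ 0 := by simp [Nat.cast_sub (Nat.one_le_iff_ne_zero.2 hQ), hQK]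
  obtain ⟨k, hk⟩ := h
  rw [hk, Nat.cast_mul] at hcast
  have hk0 : 0 < k := Nat.pos_of_ne_zero fun h0 => by simp [h0] at hcast
  have hsub : nthRootsFinset k (1 : K) ⊆ nthRootsFinset (ℓ * k) 1 := by
    intro a ha
    rw [mem_nthRootsFinset hk0] at ha
    rw [mem_nthRootsFinset (by positivity), mul_comm, pow_mul, ha, one_pow]
  have heq : nonPowers K ℓ Q = ↑(nthRootsFinset (ℓ * k) (1 : K) \ nthRootsFinset k 1) := by
    ext a
    rw [mem_nonPowers_iff hℓ hQ ⟨k, hk⟩, hk, Nat.mul_div_cancel_left k (by lia)]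
    simp [mem_nthRootsFinset (show 0 < ℓ * k by positivity), mem_nthRootsFinset hk0]
  rw [heq, Set.ncard_coe_finset, Finset.card_sdiff_of_subset hsub,
    card_nthRootsFinset_one (right_ne_zero_of_mul hcast),
    card_nthRootsFinset_one (by rwa [Nat.cast_mul]), hk, ← Nat.sub_one_mul]
  ring

end NonPowers

section Capelli

open scoped IntermediateField

variable {F K : Type*} [Field F] [Field K] [Algebra F K] {ℓ : ℕ} {a b : K}

theorem minpoly_natDegree_dvd_of_mem_adjoin (ha : IsIntegral F a) (hb : b ∈ F⟮a⟯) :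
    (minpoly F b).natDegree ∣ (minpoly F a).natDegree := by
  have := IntermediateField.adjoin.finiteDimensional ha
  rw [← IntermediateField.adjoin.finrank ha, ← IntermediateField.minpoly_eq ⟨b, hb⟩]
  exact minpoly.degree_dvd (Algebra.IsIntegral.isIntegral _)

theorem irreducible_minpoly_comp_X_pow_iff (hℓ : ℓ.Prime) (ha : IsIntegral F a) :
    Irreducible ((minpoly F a).comp (X ^ ℓ)) ↔ ∀ b ∈ F⟮a⟯, b ^ ℓ ≠ a := by
  constructor
  · rintro hirr b hb rfl
    have hmin : minpoly F b = (minpoly F (b ^ ℓ)).comp (X ^ ℓ) :=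
      (minpoly.eq_of_irreducible_of_monic hirr (by simp [aeval_comp])
        ((minpoly.monic ha).comp (monic_X_pow ℓ) (by simpa using hℓ.ne_zero))).symm
    have hle := Nat.le_of_dvd (minpoly.natDegree_pos ha) (minpoly_natDegree_dvd_of_mem_adjoin ha hb)
    rw [hmin, natDegree_comp, natDegree_X_pow] at hle
    have := minpoly.natDegree_pos ha
    have := hℓ.two_le
    nlinarith
  · intro h
    refine irreducible_comp (minpoly.monic ha) (monic_X_pow ℓ) (minpoly.irreducible ha) ?_
    intro E _ _ x hx
    have hxi : IsIntegral F x := minpoly.ne_zero_iff.1 (hx ▸ minpoly.ne_zero ha)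
    let φ : F⟮x⟯ ≃ₐ[F] F⟮a⟯ := (IntermediateField.adjoin.powerBasis hxi).equivOfMinpoly
      (IntermediateField.adjoin.powerBasis ha) (by simpa [IntermediateField.minpoly_gen] using hx)
    have hφ : φ (IntermediateField.AdjoinSimple.gen F x) = IntermediateField.AdjoinSimple.gen F a :=
      PowerBasis.equivOfMinpoly_gen ..
    rw [Polynomial.map_pow, map_X, X_pow_sub_C_irreducible_iff_of_prime hℓ]
    intro b hb
    refine h (φ b) (φ b).2 ?_
    simpa [hb, hφ] using congrArg ((↑) : F⟮a⟯ → K) (map_pow φ b ℓ).symm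

theorem mem_adjoin_simple_iff_pow_eq_self [Fintype F] (ha : IsIntegral F a) :
    b ∈ F⟮a⟯ ↔ b ^ Fintype.card F ^ (minpoly F a).natDegree = b := by
  have := IntermediateField.adjoin.finiteDimensional ha
  have : Finite F⟮a⟯ := Module.finite_of_finite F
  have hcard : Nat.card F⟮a⟯ = Fintype.card F ^ (minpoly F a).natDegree := by
    rw [Module.natCard_eq_pow_finrank (K := F), IntermediateField.adjoin.finrank ha,
      Nat.card_eq_fintype_card]
  rw [← hcard]
  constructor
  · intro hb
    have := Fintype.ofFinite F⟮a⟯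
    rw [Nat.card_eq_fintype_card]
    exact congrArg ((↑) : F⟮a⟯ → K) (FiniteField.pow_card (⟨b, hb⟩ : F⟮a⟯))
  · intro hb
    obtain ⟨c, rfl⟩ := (splits_X_pow_nat_card_sub_X (K := F⟮a⟯)).mem_range_of_isRoot
      (FiniteField.X_pow_card_sub_X_ne_zero _ Finite.one_lt_card) (i := algebraMap F⟮a⟯ K) (x := b)
      (by simpa [sub_eq_zero] using hb)
    exact c.2

end Capelli

section RootCount

variable {F K : Type*} [Field F] [Field K] [Algebra F K]

theorem mem_rootSet_iff_minpoly_eq {f : F[X]} (hm : f.Monic) (hf : Irreducible f) {a : K} :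
    a ∈ f.rootSet K ↔ minpoly F a = f := by
  rw [mem_rootSet_of_ne hf.ne_zero]
  refine ⟨fun h => (minpoly.eq_of_irreducible_of_monic hf h hm).symm, ?_⟩
  rintro rfl
  exact minpoly.aeval F a

theorem setOf_minpoly_mem_eq_biUnion_rootSet {S : Set F[X]}
    (hS : ∀ f ∈ S, f.Monic ∧ Irreducible f) :
    {a : K | minpoly F a ∈ S} = ⋃ f ∈ S, f.rootSet K := by
  ext a
  simp +contextual [mem_rootSet_iff_minpoly_eq (hS _ _).1 (hS _ _).2]

theorem finite_setOf_minpoly_mem {S : Set F[X]} (hfin : S.Finite)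
    (hS : ∀ f ∈ S, f.Monic ∧ Irreducible f) : {a : K | minpoly F a ∈ S}.Finite := by
  rw [setOf_minpoly_mem_eq_biUnion_rootSet hS]
  exact hfin.biUnion fun _ _ => Set.toFinite _

variable [PerfectField F] [IsAlgClosed K]

theorem ncard_rootSet_eq_natDegree {f : F[X]} (hf : Irreducible f) :
    (f.rootSet K).ncard = f.natDegree := by
  rw [← Set.fintypeCard_eq_ncard,
    card_rootSet_eq_natDegree (PerfectField.separable_of_irreducible hf) (IsAlgClosed.splits _)]

theorem ncard_setOf_minpoly_mem {S : Set F[X]} {n : ℕ} (hfin : S.Finite)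
    (hS : ∀ f ∈ S, f.Monic ∧ Irreducible f) (hdeg : ∀ f ∈ S, f.natDegree = n) :
    {a : K | minpoly F a ∈ S}.ncard = n * S.ncard := by
  have hdisj : S.PairwiseDisjoint fun f => f.rootSet K := fun f hf g hg hfg =>
    Set.disjoint_left.2 fun a haf hag => hfg <| by
      rw [← (mem_rootSet_iff_minpoly_eq (hS f hf).1 (hS f hf).2).1 haf,
        ← (mem_rootSet_iff_minpoly_eq (hS g hg).1 (hS g hg).2).1 hag]
  have hcard : ∀ f ∈ S, (f.rootSet K).ncard = n := fun f hf => by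
    rw [ncard_rootSet_eq_natDegree (hS f hf).2, hdeg f hf]
  rw [setOf_minpoly_mem_eq_biUnion_rootSet hS, hfin.ncard_biUnion (fun f _ => Set.toFinite _) hdisj,
    finsum_mem_congr rfl hcard]
  obtain ⟨s, rfl⟩ := hfin.exists_finset_coe
  rw [finsum_mem_coe_finset, Finset.sum_const, Set.ncard_coe_finset, smul_eq_mul, mul_comm]

end RootCount

section IrredSet

theorem ratTransform_one_right {F : Type*} [Field F] (g f : F[X]) :
    ratTransform g 1 f = f.comp g := by
  simp [ratTransform, comp, eval₂_eq_sum_range]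

variable {F : Type*} [Field F]

theorem finite_irredSet [Finite F] (g h : F[X]) (n : ℕ) : (IrredSet g h n).Finite := by
  have : Finite (degreeLT F (n + 1)) := Module.finite_of_finite F
  refine (Set.toFinite (degreeLT F (n + 1) : Set F[X])).subset ?_
  rintro f ⟨-, -, rfl, -⟩
  exact mem_degreeLT.2 (degree_le_natDegree.trans_lt (by exact_mod_cast Nat.lt_succ_self _))

variable [Fintype F] {K : Type*} [Field K] [Algebra F K] [Algebra.IsAlgebraic F K] {ℓ n : ℕ} {a : K}

theorem pow_card_pow_eq_self_iff :
    a ^ Fintype.card F ^ n = a ↔ (minpoly F a).natDegree ∣ n := by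
  have hirr := minpoly.irreducible (Algebra.IsIntegral.isIntegral (R := F) a)
  rw [hirr.natDegree_dvd_iff_dvd_X_pow_card_pow_sub_X, minpoly.dvd_iff, Nat.card_eq_fintype_card]
  simp [sub_eq_zero]

theorem minpoly_mem_irredSet_iff (hℓ : ℓ.Prime) :
    minpoly F a ∈ IrredSet (X ^ ℓ) 1 n ↔
      (minpoly F a).natDegree = n ∧ a ∈ nonPowers K ℓ (Fintype.card F ^ n) := by
  have ha : IsIntegral F a := Algebra.IsIntegral.isIntegral a
  simp only [IrredSet, Set.mem_ofPred_eq, minpoly.monic ha, minpoly.irreducible ha, true_and,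
    ratTransform_one_right, irreducible_minpoly_comp_X_pow_iff hℓ ha,
    mem_adjoin_simple_iff_pow_eq_self ha]
  refine and_congr_right ?_
  rintro rfl
  exact (and_iff_right (pow_card_pow_eq_self_iff.2 dvd_rfl)).symm

variable [IsAlgClosed K]

theorem irredSet_X_pow_eq_empty (hℓ : ℓ.Prime) (h : ¬ ℓ ∣ Fintype.card F ^ n - 1) :
    IrredSet (X ^ ℓ : F[X]) 1 n = ∅ := by
  refine Set.eq_empty_of_forall_notMem fun f hf => ?_
  obtain ⟨a, ha⟩ := IsAlgClosed.exists_aeval_eq_zero (AlgebraicClosure F) f hf.2.1.degree_pos.ne'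
  rw [minpoly.eq_of_irreducible_of_monic hf.2.1 ha hf.1, minpoly_mem_irredSet_iff hℓ,
    nonPowers_eq_empty hℓ (pow_ne_zero n Fintype.card_ne_zero) h] at hf
  exact hf.2

theorem mem_nonPowers_card_pow_iff (hℓ : ℓ.Prime) :
    a ∈ nonPowers K ℓ (Fintype.card F ^ n) ↔
      ∃ d, d ∣ n ∧ ¬ ℓ ∣ n / d ∧ minpoly F a ∈ IrredSet (X ^ ℓ) 1 d := by
  have hq (d : ℕ) : Fintype.card F ^ d ≠ 0 := pow_ne_zero d Fintype.card_ne_zero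
  simp only [minpoly_mem_irredSet_iff hℓ]
  constructor
  · intro ha
    have hdn := pow_card_pow_eq_self_iff.1 ha.1
    have ha' : a ∈ nonPowers K ℓ (Fintype.card F ^ (minpoly F a).natDegree) :=
      ⟨pow_card_pow_eq_self_iff.2 dvd_rfl, fun b hb => ha.2 b <|
        pow_card_pow_eq_self_iff.2 ((pow_card_pow_eq_self_iff.1 hb).trans hdn)⟩
    refine ⟨_, hdn, ?_, rfl, ha'⟩
    rwa [← mem_nonPowers_pow_iff hℓ (hq _) ha', ← pow_mul, Nat.mul_div_cancel' hdn]
  · rintro ⟨d, hdn, hℓd, -, ha⟩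
    rwa [← mem_nonPowers_pow_iff hℓ (hq d) ha, ← pow_mul, Nat.mul_div_cancel' hdn] at hℓd

end IrredSet

section Counting

theorem dvd_pow_sub_one_iff_orderOf_dvd {ℓ q k : ℕ} (hq : q ≠ 0) :
    ℓ ∣ q ^ k - 1 ↔ orderOf (q : ZMod ℓ) ∣ k := by
  rw [← Nat.modEq_iff_dvd' (Nat.one_le_iff_ne_zero.2 (pow_ne_zero k hq)),
    ← ZMod.natCast_eq_natCast_iff, orderOf_dvd_iff_pow_eq_one, eq_comm]
  simp

theorem coprime_orderOf_natCast {ℓ q : ℕ} (hℓ : ℓ.Prime) (hq : ¬ ℓ ∣ q) :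
    (orderOf (q : ZMod ℓ)).Coprime ℓ := by
  have := Fact.mk hℓ
  have hdvd : orderOf (q : ZMod ℓ) ∣ ℓ - 1 :=
    ZMod.orderOf_dvd_card_sub_one (by rwa [Ne, ZMod.natCast_eq_zero_iff])
  exact ((Nat.coprime_self_sub_left hℓ.one_le).2 (Nat.coprime_one_left ℓ)).coprime_dvd_left hdvd

theorem orderOf_natCast_pos {ℓ q : ℕ} (hℓ : ℓ.Prime) (hq : ¬ ℓ ∣ q) :
    0 < orderOf (q : ZMod ℓ) :=
  Nat.pos_of_ne_zero fun h => hℓ.ne_one (by simpa [h] using coprime_orderOf_natCast hℓ hq)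

theorem pow_dvd_of_not_dvd_div {ℓ v n d : ℕ} (hℓ : ℓ.Prime) (hn : ℓ ^ v ∣ n) (hd : d ∣ n)
    (h : ¬ ℓ ∣ n / d) : ℓ ^ v ∣ d := by
  rw [← Nat.mul_div_cancel' hd] at hn
  exact (((hℓ.coprime_iff_not_dvd).2 h).pow_left v).dvd_of_dvd_mul_right hn

theorem eq_mul_Ifun_sub_of_sum_divisors {N : ℕ → ℚ} {A Q : ℚ} {m : ℕ} (hm : m ≠ 0)
    (h : ∀ j, j ∣ m → ∑ k ∈ j.divisors, k * N k = A * (Q ^ j - 1)) :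
    N m = A * (Ifun m Q - Ifun m 1) := by
  have hinv := (ArithmeticFunction.sum_eq_iff_sum_mul_moebius_eq_on {j | j ∣ m}
    fun _ _ => Nat.dvd_trans).1 (fun j _ => h j) m (Nat.pos_of_ne_zero hm) dvd_rfl
  rw [Nat.sum_divisorsAntidiagonal
    (f := fun i j => ((ArithmeticFunction.moebius i : ℤ) : ℚ) * (A * (Q ^ j - 1)))] at hinv
  have hm' : (m : ℚ) ≠ 0 := by exact_mod_cast hm
  rw [← mul_right_inj' hm', ← hinv, Ifun, Ifun, ← mul_sub, ← Finset.sum_sub_distrib,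
    mul_left_comm, ← mul_assoc (m : ℚ), mul_one_div_cancel hm', one_mul, Finset.mul_sum]
  exact Finset.sum_congr rfl fun i _ => by rw [one_pow]; ring

variable {F : Type*} [Field F] [Fintype F] {K : Type*} [Field K] [Algebra F K]
  [Algebra.IsAlgebraic F K] [IsAlgClosed K] {ℓ e v m n : ℕ}

theorem mem_nonPowers_card_pow_mul_iff (hℓ : ℓ.Prime) (hq : ¬ ℓ ∣ Fintype.card F)
    (he : orderOf (Fintype.card F : ZMod ℓ) = e) (hm : ¬ ℓ ∣ m) {a : K} :
    a ∈ nonPowers K ℓ (Fintype.card F ^ (e * ℓ ^ v * m)) ↔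
      ∃ k ∈ m.divisors, minpoly F a ∈ IrredSet (X ^ ℓ) 1 (e * ℓ ^ v * k) := by
  have hcop : e.Coprime ℓ := he ▸ coprime_orderOf_natCast hℓ hq
  have hc : 0 < e * ℓ ^ v := Nat.mul_pos (he ▸ orderOf_natCast_pos hℓ hq) (pow_pos hℓ.pos v)
  have hm0 : m ≠ 0 := by rintro rfl; exact hm (dvd_zero ℓ)
  rw [mem_nonPowers_card_pow_iff hℓ]
  constructor
  · rintro ⟨d, hd, hℓd, hmem⟩
    have hed : e ∣ d := by
      rw [← he, ← dvd_pow_sub_one_iff_orderOf_dvd Fintype.card_ne_zero]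
      by_contra hnd
      simp [irredSet_X_pow_eq_empty hℓ hnd] at hmem
    have hvd : ℓ ^ v ∣ d :=
      pow_dvd_of_not_dvd_div hℓ ((dvd_mul_left _ e).mul_right m) hd hℓd
    obtain ⟨k, rfl⟩ := (hcop.pow_right v).mul_dvd_of_dvd_of_dvd hed hvd
    exact ⟨k, Nat.mem_divisors.2 ⟨Nat.dvd_of_mul_dvd_mul_left hc hd, hm0⟩, hmem⟩
  · rintro ⟨k, hk, hmem⟩
    have hkm := Nat.dvd_of_mem_divisors hk
    refine ⟨_, mul_dvd_mul_left _ hkm, ?_, hmem⟩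
    rw [Nat.mul_div_mul_left _ _ hc]
    exact fun h => hm (h.trans (Nat.div_dvd_of_dvd hkm))

variable (K) in
theorem ncard_nonPowers_card_pow_mul (hℓ : ℓ.Prime) (hq : ¬ ℓ ∣ Fintype.card F)
    (he : orderOf (Fintype.card F : ZMod ℓ) = e) (hm : ¬ ℓ ∣ m) :
    (nonPowers K ℓ (Fintype.card F ^ (e * ℓ ^ v * m))).ncard =
      ∑ k ∈ m.divisors, e * ℓ ^ v * k * (IrredSet (X ^ ℓ : F[X]) 1 (e * ℓ ^ v * k)).ncard := by
  have hc : 0 < e * ℓ ^ v := Nat.mul_pos (he ▸ orderOf_natCast_pos hℓ hq) (pow_pos hℓ.pos v)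
  have hunion : nonPowers K ℓ (Fintype.card F ^ (e * ℓ ^ v * m)) =
      ⋃ k ∈ m.divisors, {a | minpoly F a ∈ IrredSet (X ^ ℓ) 1 (e * ℓ ^ v * k)} := by
    ext a
    simp only [mem_nonPowers_card_pow_mul_iff hℓ hq he hm, Set.mem_iUnion, Set.mem_ofPred_eq,
      exists_prop]
  have hirr (k : ℕ) : ∀ f ∈ IrredSet (X ^ ℓ : F[X]) 1 (e * ℓ ^ v * k), f.Monic ∧ Irreducible f :=
    fun f hf => ⟨hf.1, hf.2.1⟩
  have hdisj : (m.divisors : Set ℕ).PairwiseDisjoint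
      fun k => {a : K | minpoly F a ∈ IrredSet (X ^ ℓ) 1 (e * ℓ ^ v * k)} :=
    fun k _ k' _ hk => Set.disjoint_left.2 fun a ha ha' =>
      hk (Nat.eq_of_mul_eq_mul_left hc (ha.2.2.1.symm.trans ha'.2.2.1))
  have hsum := m.divisors.finite_toSet.ncard_biUnion
    (fun k _ => finite_setOf_minpoly_mem (finite_irredSet _ _ _) (hirr k)) hdisj
  rw [finsum_mem_coe_finset] at hsum
  refine (congrArg Set.ncard hunion).trans (hsum.trans (Finset.sum_congr rfl fun k _ => ?_))
  exact ncard_setOf_minpoly_mem (finite_irredSet _ _ _) (hirr k) fun f hf => hf.2.2.1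

theorem ncard_irredSet_X_pow (hℓ : ℓ.Prime) (hq : ¬ ℓ ∣ Fintype.card F)
    (he : orderOf (Fintype.card F : ZMod ℓ) = e) (hm : ¬ ℓ ∣ m) :
    ((IrredSet (X ^ ℓ : F[X]) 1 (e * ℓ ^ v * m)).ncard : ℚ) =
      (ℓ - 1) / (ℓ * (e * ℓ ^ v)) *
        (Ifun m ((Fintype.card F : ℚ) ^ (e * ℓ ^ v)) - Ifun m 1) := by
  have he0 : 0 < e := he ▸ orderOf_natCast_pos hℓ hq
  have hℓ0 : 0 < ℓ := hℓ.pos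
  refine eq_mul_Ifun_sub_of_sum_divisors
    (N := fun k => ((IrredSet (X ^ ℓ : F[X]) 1 (e * ℓ ^ v * k)).ncard : ℚ))
    (fun h => hm (h ▸ dvd_zero ℓ)) fun j hj => ?_
  have hQ : Fintype.card F ^ (e * ℓ ^ v * j) ≠ 0 := pow_ne_zero _ Fintype.card_ne_zero
  have hj0 : j ≠ 0 := by rintro rfl; exact hm (Nat.eq_zero_of_zero_dvd hj ▸ dvd_zero ℓ)
  have hchar : ((Fintype.card F ^ (e * ℓ ^ v * j) : ℕ) : AlgebraicClosure F) = 0 := by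
    have hF := congrArg (algebraMap F (AlgebraicClosure F)) (FiniteField.cast_card_eq_zero F)
    rw [map_natCast, map_zero] at hF
    rw [Nat.cast_pow, hF, zero_pow (by positivity)]
  have hdvd : ℓ ∣ Fintype.card F ^ (e * ℓ ^ v * j) - 1 := by
    rw [dvd_pow_sub_one_iff_orderOf_dvd Fintype.card_ne_zero, he, mul_assoc]
    exact dvd_mul_right ..
  have hcount := ncard_nonPowers hℓ.ne_zero hQ hchar hdvd
  rw [ncard_nonPowers_card_pow_mul _ hℓ hq he fun h => hm (h.trans hj)] at hcount
  have hcountQ := congrArg (Nat.cast : ℕ → ℚ) hcount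
  push_cast [Nat.cast_sub hℓ.one_le, Nat.cast_sub (Nat.one_le_iff_ne_zero.2 hQ)] at hcountQ
  rw [← pow_mul, div_mul_eq_mul_div, ← hcountQ, Finset.mul_sum, Finset.sum_div]
  refine Finset.sum_congr rfl fun k _ => ?_
  field_simp

end Counting

theorem stmt8_general {F : Type*} [Field F] [Fintype F] {ℓ e n : ℕ} (hℓ : ℓ.Prime)
    (hq : ¬ ℓ ∣ Fintype.card F) (he : orderOf (Fintype.card F : ZMod ℓ) = e) (hn : n ≠ 0) :
    ((IrredSet (X ^ ℓ : F[X]) 1 n).ncard : ℚ) =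
      (ℓ - 1) / (ℓ * (e * ℓ ^ n.factorization ℓ)) *
        (IfunD n (e * ℓ ^ n.factorization ℓ)
            ((Fintype.card F : ℚ) ^ (e * ℓ ^ n.factorization ℓ)) -
          IfunD n (e * ℓ ^ n.factorization ℓ) 1) := by
  by_cases hdvd : e * ℓ ^ n.factorization ℓ ∣ n
  · have hm : ¬ ℓ ∣ n / (e * ℓ ^ n.factorization ℓ) := fun h => by
      have hsucc := (mul_dvd_mul_left (ℓ ^ n.factorization ℓ) h).mul_left e
      rw [← mul_assoc, Nat.mul_div_cancel' hdvd, ← pow_succ] at hsucc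
      exact Nat.pow_succ_factorization_not_dvd hn hℓ hsucc
    have hcount := ncard_irredSet_X_pow (v := n.factorization ℓ) hℓ hq he hm
    rw [Nat.mul_div_cancel' hdvd] at hcount
    simpa only [IfunD, if_pos hdvd] using hcount
  · have hen : ¬ e ∣ n := fun hen => hdvd <|
      ((he ▸ coprime_orderOf_natCast hℓ hq : e.Coprime ℓ).pow_right _).mul_dvd_of_dvd_of_dvd hen
        (Nat.ordProj_dvd n ℓ)
    rw [← he, ← dvd_pow_sub_one_iff_orderOf_dvd Fintype.card_ne_zero] at hen
    simp [irredSet_X_pow_eq_empty hℓ hen, IfunD, hdvd]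

/-- Theorem 8 (Cohen): the number of monic irreducible `f` of degree `n > 1` over `F_q`
(`3 ∤ q`) such that `f(x³)` is irreducible. -/
theorem stmt8 {F : Type*} [Field F] [Fintype F] (q : ℕ) (hq : Fintype.card F = q)
    (hq3 : ¬ 3 ∣ q) (n : ℕ) (hn : 1 < n) :
    (q % 3 = 1 →
      ((IrredSet (X ^ 3 : F[X]) 1 n).ncard : ℚ) =
        (2 / (3 * (nThree n : ℚ))) *
          (Ifun (n / nThree n) ((q : ℚ) ^ nThree n) - Ifun (n / nThree n) 1)) ∧
    (q % 3 = 2 →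
      ((IrredSet (X ^ 3 : F[X]) 1 n).ncard : ℚ) =
        (1 / (3 * (nThree n : ℚ))) *
          (IfunD n (2 * nThree n) ((q : ℚ) ^ (2 * nThree n)) - IfunD n (2 * nThree n) 1)) := by
  subst hq
  refine ⟨fun h => ?_, fun h => ?_⟩
  · have horder : orderOf (Fintype.card F : ZMod 3) = 1 := by
      rw [orderOf_eq_one_iff, ← ZMod.natCast_mod, h, Nat.cast_one]
    rw [stmt8_general Nat.prime_three hq3 horder (Nat.ne_zero_of_lt hn)]
    norm_num [IfunD, nThree, Nat.ordProj_dvd]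
  · have horder : orderOf (Fintype.card F : ZMod 3) = 2 := by
      rw [← ZMod.natCast_mod, h]
      exact orderOf_eq_prime (by decide) (by decide)
    rw [stmt8_general Nat.prime_three hq3 horder (Nat.ne_zero_of_lt hn), nThree]
    push_cast
    ring
end

section
/- Let F_q be a finite field of characteristic at least five, let σ ∈ F_q be a nonsquare, and let n > 1 be an integer. If q ≡ 1 (mod 3), then |𝓘(x^3 + 3σx, 3x^2 + σ, n, q)| = (1/(3 n_3)) (I(n/(2n_3), q^{2 n_3}) − I(n/(2n_3), 1)). If q ≡ −1 (mod 3), then |𝓘(x^3 + 3σx, 3x^2 + σ, n, q)| = (2/(3 n_3)) (I(n/n_3, q^{n_3}) − I(n/n_3, −1)). -/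
open Polynomial

/-!
Over a field containing `√s`, the map `R = (x³ + 3sx) / (3x² + s)` is conjugate to cubing:
`(x + √s)³ = (x³ + 3sx) + (3x² + s) √s`. Two distinct points `b`, `c` of a fibre of `R` therefore
satisfy `(3 (bc - s))² = -3s (b - c)²`, so `R` is injective on a finite field if `-3s` is not a
square and three-to-one away from `±√s` otherwise; this counts the elements of `𝔽_{q^m}` that are
not values of `R`.

If `a` has minimal polynomial `f` of degree `d` over `𝔽_q`, every irreducible factor of `f_R` has
degree divisible by `d`, so `f_R`, of degree `3d`, is either irreducible or has a factor of degree
`d`. Hence `a ∈ 𝔽_{q^m}` is not a value of `R` on `𝔽_{q^m}` exactly when `f_R` is irreducible and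
`3d ∤ m`. Summing over `d ∣ m` and comparing with the count above gives, for every `m`, a relation
between the cardinalities sought. As `3d ∤ m` forces `d` to contain the full power of `3` in `m`,
Möbius inversion over the integers prime to `3` solves these relations.
-/

section RationalTransform

variable {F E : Type*} [Field F] [Field E] [Algebra F E] {g h : F[X]}

/-- `a` is a value of `R = g / h` at a point of `E`, written without division: for coprime `g` and
`h` the equation forces `h` not to vanish at that point. -/
def IsRatValue (g h : F[X]) (a : E) : Prop :=
  ∃ b : E, aeval b g = a * aeval b h

lemma aeval_ratTransform (g h f : F[X]) (x : E) :
    aeval x (ratTransform g h f) = ∑ i ∈ Finset.range (f.natDegree + 1),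
      algebraMap F E (f.coeff i) * aeval x g ^ i * aeval x h ^ (f.natDegree - i) := by
  simp only [ratTransform, map_sum, map_mul, map_pow, aeval_C]

lemma aeval_ratTransform_of_aeval_eq_mul (f : F[X]) {x a : E} (hx : aeval x g = a * aeval x h) :
    aeval x (ratTransform g h f) = aeval x h ^ f.natDegree * aeval a f := by
  rw [aeval_ratTransform, aeval_eq_sum_range (p := f) a, Finset.mul_sum]
  refine Finset.sum_congr rfl fun i hi ↦ ?_
  have hsplit : aeval x h ^ f.natDegree = aeval x h ^ (f.natDegree - i) * aeval x h ^ i := by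
    rw [← pow_add, Nat.sub_add_cancel (Finset.mem_range_succ_iff.1 hi)]
  rw [hx, hsplit, Algebra.smul_def]
  ring

lemma aeval_ratTransform_of_aeval_eq_zero (g f : F[X]) {x : E} (hx : aeval x h = 0) :
    aeval x (ratTransform g h f) = algebraMap F E f.leadingCoeff * aeval x g ^ f.natDegree := by
  rw [aeval_ratTransform, Finset.sum_range_succ, Finset.sum_eq_zero, zero_add, Nat.sub_self,
    pow_zero, mul_one, leadingCoeff]
  intro i hi
  rw [hx, zero_pow (Nat.sub_ne_zero_of_lt (Finset.mem_range.1 hi)), mul_zero]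

lemma exists_root_of_aeval_ratTransform_eq_zero (hgh : IsCoprime g h) {f : F[X]} (hf : f ≠ 0)
    {x : E} (hx : aeval x (ratTransform g h f) = 0) :
    ∃ a : E, aeval a f = 0 ∧ aeval x g = a * aeval x h := by
  have hhx : aeval x h ≠ 0 := by
    intro h0
    rw [aeval_ratTransform_of_aeval_eq_zero g f h0, mul_eq_zero_iff_left (by simpa using hf)] at hx
    obtain ⟨u, v, huv⟩ := hgh
    simpa [h0, eq_zero_of_pow_eq_zero hx] using congrArg (aeval x) huv
  have hgx : aeval x g = aeval x g / aeval x h * aeval x h := (div_mul_cancel₀ _ hhx).symm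
  rw [aeval_ratTransform_of_aeval_eq_mul f hgx] at hx
  exact ⟨_, (mul_eq_zero.1 hx).resolve_left (pow_ne_zero _ hhx), hgx⟩

lemma natDegree_ratTransform (hdeg : h.natDegree < g.natDegree) (f : F[X]) :
    (ratTransform g h f).natDegree = g.natDegree * f.natDegree := by
  rcases eq_or_ne f 0 with rfl | hf
  · simp [ratTransform]
  set n := f.natDegree with hn
  have hlead : (C (f.coeff n) * g ^ n * h ^ (n - n)).natDegree = g.natDegree * n := by
    rw [Nat.sub_self, pow_zero, mul_one, natDegree_C_mul (by simpa [hn] using hf), natDegree_pow,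
      mul_comm]
  have hlower (i : ℕ) (hi : i < n) :
      (C (f.coeff i) * g ^ i * h ^ (n - i)).natDegree < g.natDegree * n :=
    calc (C (f.coeff i) * g ^ i * h ^ (n - i)).natDegree
        ≤ i * g.natDegree + (n - i) * h.natDegree :=
          natDegree_mul_le_of_le ((natDegree_C_mul_le _ _).trans natDegree_pow_le)
            natDegree_pow_le
      _ < i * g.natDegree + (n - i) * g.natDegree := by
          have : 0 < n - i := Nat.sub_pos_of_lt hi
          gcongr
      _ = g.natDegree * n := by rw [← add_mul, Nat.add_sub_cancel' hi.le, mul_comm]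
  rw [ratTransform, Finset.sum_range_succ]
  rcases n.eq_zero_or_pos with h0 | hpos
  · simp [← hn, h0]
  rw [natDegree_add_eq_right_of_natDegree_lt, hlead]
  rw [hlead]
  refine (natDegree_sum_le_of_forall_le (n := g.natDegree * n - 1) _ _ fun i hi ↦
    Nat.le_sub_one_of_lt (hlower i (Finset.mem_range.1 hi))).trans_lt ?_
  exact Nat.sub_one_lt (Nat.mul_pos (by omega) hpos).ne'

lemma natDegree_dvd_finrank_of_aeval_eq_zero [FiniteDimensional F E] {p : F[X]}
    (hp : Irreducible p) {x : E} (hx : aeval x p = 0) : p.natDegree ∣ Module.finrank F E := by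
  have hassoc : Associated (minpoly F x) p :=
    ((minpoly.irreducible (.of_finite F x)).associated_of_dvd hp (minpoly.dvd F x hx))
  rw [← natDegree_eq_natDegree (degree_eq_degree_of_associated hassoc)]
  exact minpoly.degree_dvd (.of_finite F x)

lemma natDegree_dvd_of_dvd_ratTransform (hgh : IsCoprime g h) {f p : F[X]} (hf : Irreducible f)
    (hp : Irreducible p) (hpf : p ∣ ratTransform g h f) : f.natDegree ∣ p.natDegree := by
  have : Fact (Irreducible p) := ⟨hp⟩
  have hroot : aeval (AdjoinRoot.root p) (ratTransform g h f) = 0 :=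
    aeval_eq_zero_of_dvd_aeval_eq_zero hpf (by simp [AdjoinRoot.aeval_eq])
  have := (AdjoinRoot.powerBasis hp.ne_zero).finite
  obtain ⟨a, ha, -⟩ := exists_root_of_aeval_ratTransform_eq_zero hgh hf.ne_zero hroot
  have := natDegree_dvd_finrank_of_aeval_eq_zero hf ha
  rwa [(AdjoinRoot.powerBasis hp.ne_zero).finrank, AdjoinRoot.powerBasis_dim] at this

lemma exists_irreducible_dvd_of_not_irreducible {p : F[X]} (hp0 : p.natDegree ≠ 0)
    (hp : ¬ Irreducible p) : ∃ q, Irreducible q ∧ q ∣ p ∧ 2 * q.natDegree ≤ p.natDegree := by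
  have hne : p ≠ 0 := by rintro rfl; simp at hp0
  rw [irreducible_iff_lt_natDegree_lt hne fun hu ↦ hp0 (natDegree_eq_zero_of_isUnit hu)] at hp
  push Not at hp
  obtain ⟨u, hu, hdeg, hup⟩ := hp
  rw [Finset.mem_Ioc] at hdeg
  obtain ⟨q, hq, hqu⟩ := exists_irreducible_of_natDegree_pos hdeg.1
  have := natDegree_le_of_dvd hqu hu.ne_zero
  exact ⟨q, hq, hqu.trans hup, by lia⟩

lemma exists_irreducible_dvd_ratTransform (hgh : IsCoprime g h)
    (hdeg : h.natDegree < g.natDegree) (hg : g.natDegree ≤ 3) {f : F[X]} (hf : Irreducible f)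
    (hR : ¬ Irreducible (ratTransform g h f)) :
    ∃ p, Irreducible p ∧ p ∣ ratTransform g h f ∧ p.natDegree = f.natDegree := by
  have hf0 := hf.natDegree_pos
  have hRdeg := natDegree_ratTransform hdeg f
  obtain ⟨p, hp, hpR, hple⟩ := exists_irreducible_dvd_of_not_irreducible
    (by rw [hRdeg]; exact (Nat.mul_pos (by lia) hf0).ne') hR
  obtain ⟨c, hc⟩ := natDegree_dvd_of_dvd_ratTransform hgh hf hp hpR
  have hp0 := hp.natDegree_pos
  have hc0 : c ≠ 0 := by rintro rfl; lia
  have hc2 : c < 2 := by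
    by_contra! hc2
    nlinarith
  have : c = 1 := by lia
  exact ⟨p, hp, hpR, by rw [hc, this, mul_one]⟩

lemma exists_aeval_ratTransform_minpoly_eq_zero_iff [Normal F E] (hgh : IsCoprime g h) (a : E) :
    (∃ x : E, aeval x (ratTransform g h (minpoly F a)) = 0) ↔ IsRatValue g h a := by
  have ha : IsIntegral F a := Normal.isIntegral inferInstance a
  constructor
  · rintro ⟨x, hx⟩
    obtain ⟨a', ha', hxa'⟩ :=
      exists_root_of_aeval_ratTransform_eq_zero hgh (minpoly.ne_zero ha) hx
    obtain ⟨e, rfl⟩ := minpoly.exists_algEquiv_of_root' ha.isAlgebraic ha'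
    refine ⟨e.symm x, ?_⟩
    rw [aeval_algHom_apply e.symm, hxa', map_mul, e.symm_apply_apply, ← aeval_algHom_apply]
  · rintro ⟨b, hb⟩
    exact ⟨b, by rw [aeval_ratTransform_of_aeval_eq_mul _ hb, minpoly.aeval, mul_zero]⟩

lemma exists_aeval_eq_zero_iff_natDegree_dvd_finrank [Finite E] {p : F[X]} (hp : Irreducible p) :
    (∃ x : E, aeval x p = 0) ↔ p.natDegree ∣ Module.finrank F E := by
  have := Finite.of_injective _ (algebraMap F E).injective
  refine ⟨fun ⟨x, hx⟩ ↦ natDegree_dvd_finrank_of_aeval_eq_zero hp hx, fun hdvd ↦ ?_⟩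
  have : Fact (Irreducible p) := ⟨hp⟩
  have := (AdjoinRoot.powerBasis hp.ne_zero).finite
  have : Finite (AdjoinRoot p) := Module.finite_of_finite F
  rw [← AdjoinRoot.powerBasis_dim hp.ne_zero, ← PowerBasis.finrank] at hdvd
  obtain ⟨φ⟩ := FiniteField.nonempty_algHom_of_finrank_dvd hdvd
  exact ⟨φ (AdjoinRoot.root p), by rw [aeval_algHom_apply, AdjoinRoot.aeval_eq, AdjoinRoot.mk_self,
    map_zero]⟩

theorem isRatValue_iff [Finite E] (hgh : IsCoprime g h) (hdeg : h.natDegree < g.natDegree)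
    (hg : g.natDegree ≤ 3) (a : E) :
    IsRatValue g h a ↔ (Irreducible (ratTransform g h (minpoly F a)) →
      g.natDegree * (minpoly F a).natDegree ∣ Module.finrank F E) := by
  have := Finite.of_injective _ (algebraMap F E).injective
  have ha : Irreducible (minpoly F a) := minpoly.irreducible (.of_finite F a)
  rw [← exists_aeval_ratTransform_minpoly_eq_zero_iff hgh]
  by_cases hR : Irreducible (ratTransform g h (minpoly F a))
  · rw [exists_aeval_eq_zero_iff_natDegree_dvd_finrank hR, natDegree_ratTransform hdeg]
    simp only [hR, true_imp_iff]
  · obtain ⟨p, hp, hpR, hpdeg⟩ := exists_irreducible_dvd_ratTransform hgh hdeg hg ha hR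
    have hpE : p.natDegree ∣ Module.finrank F E := hpdeg ▸ minpoly.degree_dvd (.of_finite F a)
    obtain ⟨x, hx⟩ := (exists_aeval_eq_zero_iff_natDegree_dvd_finrank hp).2 hpE
    simpa only [hR, false_imp_iff, iff_true] using ⟨x, aeval_eq_zero_of_dvd_aeval_eq_zero hpR hx⟩

lemma ncard_setOf_minpoly_eq [Finite E] {f : F[X]} (hf : Irreducible f) (hmonic : f.Monic)
    (hdvd : f.natDegree ∣ Module.finrank F E) :
    {a : E | minpoly F a = f}.ncard = f.natDegree := by
  have := Finite.of_injective _ (algebraMap F E).injective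
  have := Fintype.ofFinite E
  obtain ⟨x, hx⟩ := (exists_aeval_eq_zero_iff_natDegree_dvd_finrank (E := E) hf).2 hdvd
  have hsplit : (f.map (algebraMap F E)).Splits := by
    rw [minpoly.eq_of_irreducible_of_monic hf hx hmonic]
    exact Normal.splits inferInstance x
  have hroots : {a : E | minpoly F a = f} = f.rootSet E := by
    ext a
    rw [mem_rootSet_of_ne hf.ne_zero]
    exact ⟨fun h ↦ h ▸ minpoly.aeval F a,
      fun h ↦ (minpoly.eq_of_irreducible_of_monic hf h hmonic).symm⟩
  rw [hroots, ← Nat.card_coe_set_eq, Nat.card_eq_fintype_card,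
    card_rootSet_eq_natDegree (PerfectField.separable_of_irreducible hf) hsplit]

lemma ncard_setOf_minpoly_mem_IrredSet [Finite E] {d : ℕ} (hdvd : d ∣ Module.finrank F E) :
    {a : E | minpoly F a ∈ IrredSet g h d}.ncard = d * (IrredSet g h d).ncard := by
  have hroot (f : F[X]) (hf : f ∈ IrredSet g h d) : {a : E | minpoly F a = f}.ncard = d := by
    obtain ⟨hmonic, hirr, rfl, -⟩ := hf
    exact ncard_setOf_minpoly_eq hirr hmonic hdvd
  have hfinite : (IrredSet g h d).Finite := by
    refine (Set.finite_range (minpoly F : E → F[X])).subset fun f hf ↦ ?_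
    obtain ⟨a, ha⟩ : {a : E | minpoly F a = f}.Nonempty :=
      Set.nonempty_of_ncard_ne_zero (hroot f hf ▸ hf.2.2.1 ▸ hf.2.1.natDegree_pos.ne')
    exact ⟨a, ha⟩
  have hunion : {a : E | minpoly F a ∈ IrredSet g h d} =
      ⋃ f ∈ IrredSet g h d, {a : E | minpoly F a = f} := by
    ext a
    simp
  have hdisjoint : (IrredSet g h d).PairwiseDisjoint fun f ↦ {a : E | minpoly F a = f} :=
    fun f _ f' _ hff' ↦ Set.disjoint_left.2 fun a ha ha' ↦ hff' (Eq.trans (Eq.symm ha) ha')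
  rw [hunion, hfinite.ncard_biUnion (fun _ _ ↦ Set.toFinite _) hdisjoint,
    finsum_mem_congr rfl hroot, finsum_mem_eq_finite_toFinset_sum _ hfinite, Finset.sum_const,
    smul_eq_mul, mul_comm, Set.ncard_eq_toFinset_card _ hfinite]

theorem ncard_setOf_not_isRatValue [Finite E] (hgh : IsCoprime g h)
    (hdeg : h.natDegree < g.natDegree) (hg : g.natDegree ≤ 3) :
    {a : E | ¬ IsRatValue g h a}.ncard =
      ∑ d ∈ (Module.finrank F E).divisors with ¬ g.natDegree * d ∣ Module.finrank F E,
        d * (IrredSet g h d).ncard := by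
  have := Finite.of_injective _ (algebraMap F E).injective
  set D := (Module.finrank F E).divisors.filter (¬ g.natDegree * · ∣ Module.finrank F E) with hD
  have hunion : {a : E | ¬ IsRatValue g h a} =
      ⋃ d ∈ (D : Set ℕ), {a : E | minpoly F a ∈ IrredSet g h d} := by
    ext a
    have ha : IsIntegral F a := .of_finite F a
    have hdvd := minpoly.degree_dvd ha
    have hpos : Module.finrank F E ≠ 0 := Module.finrank_pos.ne'
    simp [hD, isRatValue_iff hgh hdeg hg, IrredSet, minpoly.monic ha, minpoly.irreducible ha,
      hdvd, hpos, and_comm]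
  rw [hunion, D.finite_toSet.ncard_biUnion (fun _ _ ↦ Set.toFinite _) ?_,
    finsum_mem_coe_finset]
  · refine Finset.sum_congr rfl fun d hd ↦ ncard_setOf_minpoly_mem_IrredSet ?_
    exact Nat.dvd_of_mem_divisors (Finset.mem_filter.1 hd).1
  · exact fun d _ d' _ hdd' ↦ Set.disjoint_left.2 fun a ha ha' ↦
      hdd' (ha.2.2.1.symm.trans ha'.2.2.1)

end RationalTransform

section RedeiFunction

variable {K : Type*} [Field K] {s : K}

/-- Numerator of the Rédei function of degree three, given by
`(X + √s) ^ 3 = redeiNum s + redeiDen s * √s`. -/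
noncomputable abbrev redeiNum (s : K) : K[X] := X ^ 3 + C (3 * s) * X

/-- Denominator of the Rédei function of degree three, see `redeiNum`. -/
noncomputable abbrev redeiDen (s : K) : K[X] := C 3 * X ^ 2 + C s

lemma natDegree_redeiNum (s : K) : (redeiNum s).natDegree = 3 := by
  rw [redeiNum]
  compute_degree!

lemma natDegree_redeiDen_lt (s : K) : (redeiDen s).natDegree < (redeiNum s).natDegree := by
  rw [natDegree_redeiNum, Nat.lt_succ_iff, redeiDen]
  compute_degree

lemma isCoprime_redeiNum_redeiDen (h2 : (2 : K) ≠ 0) (hs : s ≠ 0) :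
    IsCoprime (redeiNum s) (redeiDen s) := by
  have h8 : 8 * s ^ 2 ≠ 0 := by
    rw [show (8 : K) = 2 ^ 3 by norm_num]
    exact mul_ne_zero (pow_ne_zero 3 h2) (pow_ne_zero 2 hs)
  have hinv : C (8 * s ^ 2)⁻¹ * C (8 * s ^ 2) = 1 := by
    rw [← C_mul, inv_mul_cancel₀ h8, C_1]
  refine ⟨C (8 * s ^ 2)⁻¹ * (-9 * X), C (8 * s ^ 2)⁻¹ * (C (8 * s) + 3 * X ^ 2), ?_⟩
  simp only [redeiNum, redeiDen, map_mul, map_pow, map_ofNat] at hinv ⊢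
  linear_combination hinv

lemma isRatValue_redei_iff {E : Type*} [Field E] [Algebra K E] {a : E} :
    IsRatValue (redeiNum s) (redeiDen s) a ↔
      ∃ b : E, b ^ 3 + 3 * algebraMap K E s * b = a * (3 * b ^ 2 + algebraMap K E s) := by
  simp [IsRatValue, map_ofNat (algebraMap K E) 3]

variable [Fintype K] [DecidableEq K]

/-- The fibre over `a` of the Rédei function of degree three, with the denominator cleared as in
`IsRatValue`. -/
def redeiFiber (s a : K) : Finset K := {b | b ^ 3 + 3 * s * b = a * (3 * b ^ 2 + s)}

lemma mem_redeiFiber {a b : K} :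
    b ∈ redeiFiber s a ↔ b ^ 3 + 3 * s * b = a * (3 * b ^ 2 + s) := by
  simp [redeiFiber]

lemma redeiDen_ne_zero_of_mem_redeiFiber (h2 : (2 : K) ≠ 0) (hs : s ≠ 0) {a b : K}
    (hb : b ∈ redeiFiber s a) : 3 * b ^ 2 + s ≠ 0 := by
  rw [mem_redeiFiber] at hb
  intro h0
  have : 2 ^ 3 * s ^ 2 = 0 := by
    linear_combination (8 * s + 3 * b ^ 2 - 9 * b * a) * h0 - 9 * b * hb
  simp_all

lemma card_setOf_redeiDen_eq_zero (hK : ringChar K ≠ 2) (h3 : (3 : K) ≠ 0) (s : K) :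
    (Finset.card {b : K | 3 * b ^ 2 + s = 0} : ℤ) = quadraticChar K (-3 * s) + 1 := by
  rw [← quadraticChar_card_sqrts hK]
  congr 1
  refine Finset.card_equiv (Equiv.mulLeft₀ 3 h3) fun b ↦ ?_
  simp only [Finset.mem_filter_univ, Set.mem_toFinset, Set.mem_ofPred_eq, Equiv.mulLeft₀_apply]
  constructor <;> intro hb
  · linear_combination 3 * hb
  · refine mul_left_cancel₀ h3 ?_
    linear_combination hb

lemma sum_card_redeiFiber (hK : ringChar K ≠ 2) (h3 : (3 : K) ≠ 0) (hs : s ≠ 0) :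
    (∑ a : K, (redeiFiber s a).card : ℤ) = Fintype.card K - (quadraticChar K (-3 * s) + 1) := by
  set S : Finset K := {b | ¬ 3 * b ^ 2 + s = 0}
  have hfiber (a : K) :
      redeiFiber s a = {b ∈ S | (b ^ 3 + 3 * s * b) / (3 * b ^ 2 + s) = a} := by
    ext b
    rw [Finset.mem_filter, Finset.mem_filter_univ]
    constructor
    · intro hb
      have hden := redeiDen_ne_zero_of_mem_redeiFiber (Ring.two_ne_zero hK) hs hb
      exact ⟨hden, (div_eq_iff hden).2 (mem_redeiFiber.1 hb)⟩
    · exact fun ⟨hden, hb⟩ ↦ mem_redeiFiber.2 ((div_eq_iff hden).1 hb)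
  have hcount : S.card = ∑ a : K, (redeiFiber s a).card := by
    simp only [hfiber]
    exact Finset.card_eq_sum_card_fiberwise fun b _ ↦ Finset.mem_univ _
  have hsplit : Finset.card {b : K | 3 * b ^ 2 + s = 0} + S.card = Fintype.card K :=
    Finset.card_filter_add_card_filter_not _
  rw [← card_setOf_redeiDen_eq_zero hK h3, ← Nat.cast_sum, ← hcount, ← hsplit]
  push_cast
  ring

lemma redeiFiber_of_sq_eq {a : K} (ha : a ^ 2 = s) : redeiFiber s a = {a} := by
  ext b
  rw [mem_redeiFiber, Finset.mem_singleton]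
  constructor
  · intro hb
    have hcube : (b - a) ^ 3 = 0 := by linear_combination hb + (3 * b - a) * ha
    exact sub_eq_zero.1 (eq_zero_of_pow_eq_zero hcube)
  · rintro rfl
    linear_combination -2 * b * ha

lemma mem_redeiFiber_iff_of_mem (h2 : (2 : K) ≠ 0) (h3 : (3 : K) ≠ 0) (hs : s ≠ 0) {a b c : K}
    (hb : b ∈ redeiFiber s a) :
    c ∈ redeiFiber s a ↔ c = b ∨ (3 * (b * c - s)) ^ 2 = -3 * s * (b - c) ^ 2 := by
  have hden := redeiDen_ne_zero_of_mem_redeiFiber h2 hs hb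
  rw [mem_redeiFiber] at hb ⊢
  have hfactor : 3 * (3 * b ^ 2 + s) * (c ^ 3 + 3 * s * c - a * (3 * c ^ 2 + s)) =
      (c - b) * ((3 * (b * c - s)) ^ 2 - -3 * s * (b - c) ^ 2) := by
    linear_combination 3 * (3 * c ^ 2 + s) * hb
  rw [← sub_eq_zero, ← mul_eq_zero_iff_left (mul_ne_zero h3 hden), hfactor, mul_eq_zero,
    sub_eq_zero, sub_eq_zero]

lemma card_redeiFiber_le_one (h2 : (2 : K) ≠ 0) (h3 : (3 : K) ≠ 0) (hs : ¬ IsSquare (-3 * s))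
    (a : K) : (redeiFiber s a).card ≤ 1 := by
  have hs0 : s ≠ 0 := by
    rintro rfl
    simp at hs
  rw [Finset.card_le_one]
  intro b hb c hc
  by_contra hbc
  have hsq := ((mem_redeiFiber_iff_of_mem h2 h3 hs0 hb).1 hc).resolve_left (Ne.symm hbc)
  refine hs ⟨3 * (b * c - s) / (b - c), ?_⟩
  have := sub_ne_zero.2 hbc
  rw [div_mul_div_comm, eq_div_iff (mul_ne_zero this this)]
  linear_combination -hsq

lemma three_mul_add_ne_zero_of_mem_redeiFiber (h2 : (2 : K) ≠ 0) (h3 : (3 : K) ≠ 0) (hs : s ≠ 0)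
    {r : K} (hr : -3 * s = r * r) {a b : K} (hb : b ∈ redeiFiber s a) : 3 * b + r ≠ 0 := by
  have hfactor : (3 * b + r) * (3 * b - r) = 3 * (3 * b ^ 2 + s) := by linear_combination hr
  refine left_ne_zero_of_mul (b := 3 * b - r) ?_
  rw [hfactor]
  exact mul_ne_zero h3 (redeiDen_ne_zero_of_mem_redeiFiber h2 hs hb)

lemma redeiFiber_eq_of_mem (h2 : (2 : K) ≠ 0) (h3 : (3 : K) ≠ 0) (hs : s ≠ 0) {r : K}
    (hr : -3 * s = r * r) {a b : K} (hb : b ∈ redeiFiber s a) :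
    redeiFiber s a = {b, (3 * s + r * b) / (3 * b + r), (3 * s + -r * b) / (3 * b + -r)} := by
  have hadd := three_mul_add_ne_zero_of_mem_redeiFiber h2 h3 hs hr hb
  have hsub := three_mul_add_ne_zero_of_mem_redeiFiber h2 h3 hs (hr.trans (neg_mul_neg r r).symm) hb
  ext c
  rw [mem_redeiFiber_iff_of_mem h2 h3 hs hb, hr, ← sq, ← mul_pow, sq_eq_sq_iff_eq_or_eq_neg,
    Finset.mem_insert, Finset.mem_insert, Finset.mem_singleton, eq_div_iff hadd, eq_div_iff hsub]
  refine or_congr_right (or_congr ⟨fun h ↦ ?_, fun h ↦ ?_⟩ ⟨fun h ↦ ?_, fun h ↦ ?_⟩) <;>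
    linear_combination h

lemma card_redeiFiber_of_isSquare (h2 : (2 : K) ≠ 0) (h3 : (3 : K) ≠ 0) (hs0 : s ≠ 0)
    (hs : IsSquare (-3 * s)) {a : K} (ha : a ^ 2 ≠ s) (hne : (redeiFiber s a).Nonempty) :
    (redeiFiber s a).card = 3 := by
  obtain ⟨b, hb⟩ := hne
  obtain ⟨r, hr⟩ := hs
  have hr0 : r ≠ 0 := by
    rintro rfl
    simp_all
  have hbs : b ^ 2 - s ≠ 0 := by
    intro h0
    have hab : a = b := mul_right_cancel₀ (redeiDen_ne_zero_of_mem_redeiFiber h2 hs0 hb) (by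
      linear_combination -mem_redeiFiber.1 hb - 2 * b * h0)
    exact ha (hab ▸ sub_eq_zero.1 h0)
  have hadd := three_mul_add_ne_zero_of_mem_redeiFiber h2 h3 hs0 hr hb
  have hsub := three_mul_add_ne_zero_of_mem_redeiFiber h2 h3 hs0
    (hr.trans (neg_mul_neg r r).symm) hb
  rw [redeiFiber_eq_of_mem h2 h3 hs0 hr hb, Finset.card_eq_three]
  refine ⟨_, _, _, ?_, ?_, ?_, rfl⟩
  · rw [Ne, eq_div_iff hadd]
    exact fun h ↦ mul_ne_zero h3 hbs (by linear_combination h)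
  · rw [Ne, eq_div_iff hsub]
    exact fun h ↦ mul_ne_zero h3 hbs (by linear_combination h)
  · rw [Ne, div_eq_div_iff hadd hsub]
    exact fun h ↦ mul_ne_zero (mul_ne_zero h2 (mul_ne_zero h3 hr0)) hbs (by linear_combination h)

lemma card_setOf_redeiFiber_eq_empty_of_not_isSquare (hK : ringChar K ≠ 2) (h3 : (3 : K) ≠ 0)
    (hs : ¬ IsSquare (-3 * s)) : Finset.card {a : K | redeiFiber s a = ∅} = 0 := by
  have hs0 : s ≠ 0 := by
    rintro rfl
    simp at hs
  have hsum : ∑ a : K, (redeiFiber s a).card = ∑ a : K, 1 := by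
    have := sum_card_redeiFiber hK h3 hs0
    rw [quadraticChar_neg_one_iff_not_isSquare.2 hs, neg_add_cancel, sub_zero] at this
    simpa using mod_cast this
  rw [Finset.sum_eq_sum_iff_of_le
    fun a _ ↦ card_redeiFiber_le_one (Ring.two_ne_zero hK) h3 hs a] at hsum
  simp [← Finset.card_eq_zero, hsum]

lemma three_mul_card_setOf_redeiFiber_eq_empty_of_isSquare (hK : ringChar K ≠ 2) (h3 : (3 : K) ≠ 0)
    (hs0 : s ≠ 0) (hs : IsSquare (-3 * s)) :
    (3 * Finset.card {a : K | redeiFiber s a = ∅} : ℤ) =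
      2 * (Fintype.card K - quadraticChar K s) := by
  have hcard (a : K) : ((redeiFiber s a).card : ℤ) =
      3 - (if a ^ 2 = s then 2 else 0) - (if redeiFiber s a = ∅ then 3 else 0) := by
    by_cases ha : a ^ 2 = s
    · simp [redeiFiber_of_sq_eq ha, ha]
    rcases (redeiFiber s a).eq_empty_or_nonempty with h0 | hne
    · simp [h0, ha]
    · simp [card_redeiFiber_of_isSquare (Ring.two_ne_zero hK) h3 hs0 hs ha hne, hne.ne_empty, ha]
  have hsum := sum_card_redeiFiber hK h3 hs0
  have hsqrt := quadraticChar_card_sqrts hK s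
  have hpole : quadraticChar K (-3 * s) = 1 :=
    (quadraticChar_one_iff_isSquare (mul_ne_zero (neg_ne_zero.2 h3) hs0)).2 hs
  simp only [hcard, hpole, Finset.sum_sub_distrib, Finset.sum_ite, Finset.sum_const,
    Finset.card_univ, nsmul_eq_mul] at hsum
  simp only [Set.toFinset_ofPred] at hsqrt
  linarith

theorem three_mul_card_setOf_redeiFiber_eq_empty (hK : ringChar K ≠ 2) (h3 : (3 : K) ≠ 0)
    (hs : s ≠ 0) :
    (3 * Finset.card {a : K | redeiFiber s a = ∅} : ℤ) =
      (1 + quadraticChar K (-3 * s)) * (Fintype.card K - quadraticChar K s) := by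
  have : -3 * s ≠ 0 := mul_ne_zero (neg_ne_zero.2 h3) hs
  by_cases hsq : IsSquare (-3 * s)
  · rw [three_mul_card_setOf_redeiFiber_eq_empty_of_isSquare hK h3 hs hsq,
      (quadraticChar_one_iff_isSquare this).2 hsq]
    ring
  · rw [card_setOf_redeiFiber_eq_empty_of_not_isSquare hK h3 hsq,
      quadraticChar_neg_one_iff_not_isSquare.2 hsq]
    ring

end RedeiFunction

section FiniteFieldExtension

variable {F : Type*} [Field F] [Fintype F]

theorem isSquare_neg_three_iff (h2 : (2 : F) ≠ 0) (h3 : (3 : F) ≠ 0) :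
    IsSquare (-3 : F) ↔ Fintype.card F % 3 = 1 := by
  have hcard : Fintype.card F % 3 = 1 ↔ 3 ∣ Fintype.card F - 1 := by
    have := Fintype.one_lt_card (α := F)
    lia
  rw [hcard]
  constructor
  · rintro ⟨r, hr⟩
    have hw3 : ((r - 1) / 2) ^ 3 = 1 := by
      field_simp
      linear_combination (3 - r) * hr
    have hw1 : (r - 1) / 2 ≠ 1 := by
      intro h
      rw [div_eq_one_iff_eq h2] at h
      refine mul_ne_zero (mul_ne_zero h2 h2) h3 ?_
      linear_combination -hr - (r + 3) * h
    have hw0 : (r - 1) / 2 ≠ 0 := by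
      intro h
      simp [h] at hw3
    rw [← orderOf_eq_prime hw3 hw1]
    exact orderOf_dvd_of_pow_eq_one (FiniteField.pow_card_sub_one_eq_one _ hw0)
  · intro hdvd
    classical
    rw [← Fintype.card_units, ← Nat.card_eq_fintype_card] at hdvd
    obtain ⟨w, hw⟩ := exists_prime_orderOf_dvd_card' 3 hdvd
    have hprim : IsPrimitiveRoot w 3 := hw ▸ IsPrimitiveRoot.orderOf w
    have hprim : IsPrimitiveRoot (w : F) 3 := IsPrimitiveRoot.coe_units_iff.2 hprim
    have hsum := hprim.geom_sum_eq_zero (by norm_num)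
    simp only [Finset.sum_range_succ, Finset.sum_range_zero] at hsum
    exact ⟨2 * w + 1, by linear_combination -4 * hsum⟩

lemma three_ne_zero_of_card_mod_three_ne_zero (hF : Fintype.card F % 3 ≠ 0) : (3 : F) ≠ 0 := by
  intro h3
  have hdvd : ringChar F ∣ 3 := (ringChar.spec F 3).1 (by exact_mod_cast h3)
  have hchar : ringChar F = 3 :=
    (Nat.prime_dvd_prime_iff_eq (CharP.char_is_prime F _) Nat.prime_three).1 hdvd
  exact hF (Nat.mod_eq_zero_of_dvd ((prime_dvd_char_iff_dvd_card 3).1 hchar.symm.dvd))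

variable [DecidableEq F]

theorem quadraticChar_algebraMap {E : Type*} [Field E] [Fintype E] [DecidableEq E] [Algebra F E]
    (a : F) : quadraticChar E (algebraMap F E a) = quadraticChar F a ^ Module.finrank F E := by
  rcases eq_or_ne a 0 with rfl | ha
  · simp [Module.finrank_pos.ne']
  have ha' : algebraMap F E a ≠ 0 := (_root_.map_ne_zero _).2 ha
  by_cases hsq : IsSquare a
  · rw [(quadraticChar_one_iff_isSquare ha).2 hsq, one_pow,
      (quadraticChar_one_iff_isSquare ha').2 (hsq.map _)]
  have hirr : Irreducible (X ^ 2 - C a : F[X]) :=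
    X_pow_sub_C_irreducible_of_prime Nat.prime_two fun b hb ↦ hsq ⟨b, hb ▸ sq b⟩
  have hsqE : IsSquare (algebraMap F E a) ↔ Even (Module.finrank F E) := by
    rw [even_iff_two_dvd, ← natDegree_X_pow_sub_C (n := 2) (r := a),
      ← exists_aeval_eq_zero_iff_natDegree_dvd_finrank hirr, isSquare_iff_exists_sq]
    simp [sub_eq_zero, eq_comm (a := algebraMap F E a)]
  rw [quadraticChar_neg_one_iff_not_isSquare.2 hsq]
  by_cases heven : Even (Module.finrank F E)
  · rw [heven.neg_one_pow, (quadraticChar_one_iff_isSquare ha').2 (hsqE.2 heven)]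
  · rw [(Nat.not_even_iff_odd.1 heven).neg_one_pow,
      quadraticChar_neg_one_iff_not_isSquare.2 (mt hsqE.1 heven)]

theorem three_mul_ncard_not_isRatValue_redei {E : Type*} [Field E] [Finite E] [Algebra F E]
    (hF : ringChar F ≠ 2) (h3 : (3 : F) ≠ 0) {s : F} (hs : s ≠ 0) :
    (3 * {a : E | ¬ IsRatValue (redeiNum s) (redeiDen s) a}.ncard : ℤ) =
      (1 + quadraticChar F (-3 * s) ^ Module.finrank F E) *
        (Fintype.card F ^ Module.finrank F E - quadraticChar F s ^ Module.finrank F E) := by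
  classical
  have := Fintype.ofFinite E
  have hE : ringChar E ≠ 2 := Algebra.ringChar_eq F E ▸ hF
  have h3E : (3 : E) ≠ 0 := map_ofNat (algebraMap F E) 3 ▸ (_root_.map_ne_zero _).2 h3
  have hsE : algebraMap F E s ≠ 0 := (_root_.map_ne_zero _).2 hs
  have hempty : {a : E | ¬ IsRatValue (redeiNum s) (redeiDen s) a} =
      ({a : E | redeiFiber (algebraMap F E s) a = ∅} : Finset E) := by
    ext a
    simp [isRatValue_redei_iff, Finset.eq_empty_iff_forall_notMem, mem_redeiFiber]
  have hneg : -3 * algebraMap F E s = algebraMap F E (-3 * s) := by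
    rw [map_mul, map_neg, map_ofNat]
  rw [hempty, Set.ncard_coe_finset, three_mul_card_setOf_redeiFiber_eq_empty hE h3E hsE, hneg,
    quadraticChar_algebraMap, quadraticChar_algebraMap,
    Module.card_eq_pow_finrank (K := F) (V := E), Nat.cast_pow]

theorem three_mul_sum_ncard_IrredSet_redei (hF : ringChar F ≠ 2) (h3 : (3 : F) ≠ 0) {s : F}
    (hs : s ≠ 0) {m : ℕ} (hm : m ≠ 0) :
    (3 * ∑ d ∈ m.divisors with ¬ 3 * d ∣ m,
      d * (IrredSet (redeiNum s) (redeiDen s) d).ncard : ℤ) =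
      (1 + quadraticChar F (-3 * s) ^ m) * (Fintype.card F ^ m - quadraticChar F s ^ m) := by
  have : NeZero m := ⟨hm⟩
  have : Fact (ringChar F).Prime := ⟨CharP.char_is_prime F _⟩
  let E := FiniteField.Extension F (ringChar F) m
  have hfinrank : Module.finrank F E = m := FiniteField.finrank_extension F (ringChar F) m
  have hsum := ncard_setOf_not_isRatValue (E := E)
    (isCoprime_redeiNum_redeiDen (Ring.two_ne_zero hF) hs) (natDegree_redeiDen_lt s)
    (natDegree_redeiNum s).le
  have hcount := three_mul_ncard_not_isRatValue_redei (E := E) hF h3 hs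
  rw [hsum, natDegree_redeiNum, hfinrank] at hcount
  exact_mod_cast hcount

end FiniteFieldExtension

section MoebiusInversion

lemma mul_pow_dvd_of_not_mul_dvd {r c a d j : ℕ} (hr : r.Prime) (hc : c.Coprime r) (hcd : c ∣ d)
    (hd : d ∣ c * r ^ a * j) (hrd : ¬ r * d ∣ c * r ^ a * j) : c * r ^ a ∣ d := by
  obtain ⟨t, ht⟩ := hd
  have hrt : ¬ r ∣ t := fun h ↦ hrd (by rw [ht, mul_comm r]; exact mul_dvd_mul_left d h)
  have hpow : r ^ a ∣ d * t := ht ▸ (Dvd.intro_left c rfl).mul_right j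
  exact (hc.pow_right a).mul_dvd_of_dvd_of_dvd hcd
    (((hr.coprime_iff_not_dvd.2 hrt).pow_left a).dvd_of_dvd_mul_right hpow)

theorem sum_divisors_filter_not_mul_dvd {A : Type*} [AddCommMonoid A] {r c j : ℕ} (hr : r.Prime)
    (hc : c.Coprime r) (a : ℕ) (hj : ¬ r ∣ j) {f : ℕ → A} (hf : ∀ d, f d ≠ 0 → c ∣ d) :
    ∑ d ∈ (c * r ^ a * j).divisors with ¬ r * d ∣ c * r ^ a * j, f d =
      ∑ i ∈ j.divisors, f (c * r ^ a * i) := by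
  have hc0 : c ≠ 0 := by
    rintro rfl
    exact hr.ne_one (Nat.coprime_zero_left r |>.1 hc)
  have hj0 : j ≠ 0 := by
    rintro rfl
    simp at hj
  have he : c * r ^ a ≠ 0 := mul_ne_zero hc0 (pow_ne_zero a hr.ne_zero)
  rw [← Finset.sum_image (g := (c * r ^ a * ·)) (fun i _ i' _ h ↦ Nat.eq_of_mul_eq_mul_left
    (Nat.pos_of_ne_zero he) h)]
  symm
  refine Finset.sum_subset ?_ fun d hd hd' ↦ ?_
  · simp only [Finset.subset_iff, Finset.mem_image, Finset.mem_filter, Nat.mem_divisors]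
    rintro _ ⟨i, ⟨hi, -⟩, rfl⟩
    refine ⟨⟨mul_dvd_mul_left _ hi, mul_ne_zero he hj0⟩, fun h ↦ hj ?_⟩
    rw [mul_left_comm, mul_dvd_mul_iff_left he] at h
    exact dvd_of_mul_right_dvd h
  · rw [Finset.mem_filter, Nat.mem_divisors] at hd
    contrapose! hd'
    obtain ⟨i, rfl⟩ := mul_pow_dvd_of_not_mul_dvd hr hc (hf d hd') hd.1.1 hd.2
    exact Finset.mem_image_of_mem _
      (Nat.mem_divisors.2 ⟨(mul_dvd_mul_iff_left he).1 hd.1.1, hj0⟩)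

theorem eq_Ifun_sub_Ifun_of_sum_divisors {r : ℕ} {M : ℕ → ℚ} {A x y : ℚ}
    (hM : ∀ j, 0 < j → ¬ r ∣ j → ∑ i ∈ j.divisors, i * M i = A * (x ^ j - y ^ j)) {k : ℕ}
    (hk : 0 < k) (hrk : ¬ r ∣ k) : M k = A * (Ifun k x - Ifun k y) := by
  have hinv := (ArithmeticFunction.sum_eq_iff_sum_mul_moebius_eq_on {j | ¬ r ∣ j}
    fun m n hmn hn hm ↦ hn (hm.trans hmn)).1 hM k hk hrk
  have hk0 : (k : ℚ) ≠ 0 := Nat.cast_ne_zero.2 hk.ne'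
  rw [Nat.sum_divisorsAntidiagonal fun d e ↦
    ((ArithmeticFunction.moebius d : ℤ) : ℚ) * (A * (x ^ e - y ^ e))] at hinv
  rw [Ifun, Ifun, ← mul_sub, ← Finset.sum_sub_distrib, ← mul_right_inj' hk0, ← hinv]
  field_simp
  rw [Finset.mul_sum]
  refine Finset.sum_congr rfl fun d _ ↦ ?_
  ring

theorem eq_Ifun_sub_Ifun_of_sum_divisors_filter {r c : ℕ} (hr : r.Prime) (hc : c.Coprime r)
    {M : ℕ → ℚ} (hMc : ∀ d, M d ≠ 0 → c ∣ d) {A x y : ℚ}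
    (hM : ∀ m, m ≠ 0 → c ∣ m →
      ∑ d ∈ m.divisors with ¬ r * d ∣ m, d * M d = A * (x ^ m - y ^ m))
    {n : ℕ} (hn : n ≠ 0) (hcn : c ∣ n) {e : ℕ} (he : e = c * r ^ n.factorization r) :
    M n = A / e * (Ifun (n / e) (x ^ e) - Ifun (n / e) (y ^ e)) := by
  obtain ⟨k, hk⟩ : e ∣ n :=
    he ▸ (hc.pow_right _).mul_dvd_of_dvd_of_dvd hcn (Nat.ordProj_dvd n r)
  have he0 : e ≠ 0 := by
    rintro rfl
    simp [hk] at hn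
  have hk0 : k ≠ 0 := by
    rintro rfl
    simp [hk] at hn
  have hrk : ¬ r ∣ k := by
    rintro ⟨t, rfl⟩
    refine Nat.pow_succ_factorization_not_dvd hn hr ⟨c * t, hk.trans ?_⟩
    rw [he]
    ring
  have hsum (j : ℕ) (hj : 0 < j) (hrj : ¬ r ∣ j) :
      ∑ i ∈ j.divisors, i * (e * M (e * i)) = A * ((x ^ e) ^ j - (y ^ e) ^ j) := by
    have hej := hM (e * j) (mul_ne_zero he0 hj.ne') (he ▸ (Dvd.intro _ rfl).mul_right j)
    rw [he, sum_divisors_filter_not_mul_dvd hr hc _ hrj fun d hd ↦ hMc d (right_ne_zero_of_mul hd),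
      ← he] at hej
    rw [← pow_mul, ← pow_mul, ← hej]
    refine Finset.sum_congr rfl fun i _ ↦ ?_
    push_cast
    ring
  have hMk := eq_Ifun_sub_Ifun_of_sum_divisors (M := fun i ↦ e * M (e * i)) hsum
    (Nat.pos_of_ne_zero hk0) hrk
  rw [← hk] at hMk
  have he0' : (e : ℚ) ≠ 0 := Nat.cast_ne_zero.2 he0
  rw [hk, Nat.mul_div_cancel_left k (Nat.pos_of_ne_zero he0), ← hk, div_mul_eq_mul_div,
    eq_div_iff he0', ← hMk, mul_comm]

end MoebiusInversion

section RedeiCount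

variable {F : Type*} [Field F] [Fintype F] {s : F}

lemma sum_ncard_IrredSet_redei_of_card_mod_three_eq_two (hF : Fintype.card F % 3 = 2)
    (hs : ¬ IsSquare s) {m : ℕ} (hm : m ≠ 0) :
    ∑ d ∈ m.divisors with ¬ 3 * d ∣ m, (d : ℚ) * (IrredSet (redeiNum s) (redeiDen s) d).ncard =
      2 / 3 * (Fintype.card F ^ m - (-1) ^ m) := by
  classical
  have h2 : ringChar F ≠ 2 := fun h ↦ hs (FiniteField.isSquare_of_char_two h s)
  have h3 : (3 : F) ≠ 0 := three_ne_zero_of_card_mod_three_ne_zero (by lia)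
  have hs0 : s ≠ 0 := by
    rintro rfl
    simp at hs
  have hneg : ¬ IsSquare (-3 : F) := by
    rw [isSquare_neg_three_iff (Ring.two_ne_zero h2) h3]
    lia
  have hsum := three_mul_sum_ncard_IrredSet_redei h2 h3 hs0 hm
  rw [map_mul, quadraticChar_neg_one_iff_not_isSquare.2 hneg,
    quadraticChar_neg_one_iff_not_isSquare.2 hs, neg_one_mul, neg_neg, one_pow] at hsum
  have := congrArg (Int.cast : ℤ → ℚ) hsum
  push_cast at this
  linarith

lemma sum_ncard_IrredSet_redei_of_card_mod_three_eq_one (hF : Fintype.card F % 3 = 1)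
    (hs : ¬ IsSquare s) {m : ℕ} (hm : m ≠ 0) :
    ∑ d ∈ m.divisors with ¬ 3 * d ∣ m, (d : ℚ) * (IrredSet (redeiNum s) (redeiDen s) d).ncard =
      (1 + (-1) ^ m) / 3 * (Fintype.card F ^ m - (-1) ^ m) := by
  classical
  have h2 : ringChar F ≠ 2 := fun h ↦ hs (FiniteField.isSquare_of_char_two h s)
  have h3 : (3 : F) ≠ 0 := three_ne_zero_of_card_mod_three_ne_zero (by lia)
  have hs0 : s ≠ 0 := by
    rintro rfl
    simp at hs
  have hneg : IsSquare (-3 : F) := (isSquare_neg_three_iff (Ring.two_ne_zero h2) h3).2 hF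
  have hsum := three_mul_sum_ncard_IrredSet_redei h2 h3 hs0 hm
  rw [map_mul, (quadraticChar_one_iff_isSquare (neg_ne_zero.2 h3)).2 hneg, one_mul,
    quadraticChar_neg_one_iff_not_isSquare.2 hs] at hsum
  have := congrArg (Int.cast : ℤ → ℚ) hsum
  push_cast at this
  linarith

lemma two_dvd_of_ncard_IrredSet_redei_ne_zero (hF : Fintype.card F % 3 = 1)
    (hs : ¬ IsSquare s) {d : ℕ} (hd : (IrredSet (redeiNum s) (redeiDen s) d).ncard ≠ 0) :
    2 ∣ d := by
  have hd0 : d ≠ 0 := by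
    obtain ⟨f, -, hirr, rfl, -⟩ := Set.nonempty_of_ncard_ne_zero hd
    exact hirr.natDegree_pos.ne'
  by_contra hodd
  have hsum := sum_ncard_IrredSet_redei_of_card_mod_three_eq_one hF hs hd0
  rw [Odd.neg_one_pow (by rwa [← Nat.not_even_iff_odd, even_iff_two_dvd]), add_neg_cancel,
    zero_div, zero_mul, Finset.sum_eq_zero_iff_of_nonneg fun _ _ ↦ by positivity] at hsum
  have hmem : d ∈ {i ∈ d.divisors | ¬ 3 * i ∣ d} := by
    simp only [Finset.mem_filter, Nat.mem_divisors_self d hd0, true_and]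
    exact fun h ↦ by have := Nat.le_of_dvd (Nat.pos_of_ne_zero hd0) h; lia
  exact mul_ne_zero (Nat.cast_ne_zero.2 hd0) (Nat.cast_ne_zero.2 hd) (hsum d hmem)

theorem ncard_IrredSet_redei_of_card_mod_three_eq_one (hF : Fintype.card F % 3 = 1)
    (hs : ¬ IsSquare s) {n : ℕ} (hn : n ≠ 0) :
    ((IrredSet (redeiNum s) (redeiDen s) n).ncard : ℚ) = 1 / (3 * nThree n) *
      (IfunD n (2 * nThree n) (Fintype.card F ^ (2 * nThree n)) - IfunD n (2 * nThree n) 1) := by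
  have hvanish (d : ℕ) (hd : ((IrredSet (redeiNum s) (redeiDen s) d).ncard : ℚ) ≠ 0) : 2 ∣ d :=
    two_dvd_of_ncard_IrredSet_redei_ne_zero hF hs (Nat.cast_ne_zero.1 hd)
  by_cases h2 : 2 ∣ n
  · have hdvd : 2 * nThree n ∣ n :=
      Nat.Coprime.mul_dvd_of_dvd_of_dvd (.pow_right _ (by norm_num)) h2 (Nat.ordProj_dvd n 3)
    rw [IfunD, IfunD, if_pos hdvd, if_pos hdvd]
    rw [eq_Ifun_sub_Ifun_of_sum_divisors_filter Nat.prime_three (by norm_num) hvanish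
      (A := 2 / 3) (x := Fintype.card F) (y := -1) ?_ hn h2 (e := 2 * nThree n) rfl,
      (even_two_mul _).neg_one_pow]
    · push_cast
      field_simp
    · intro m hm hm2
      rw [sum_ncard_IrredSet_redei_of_card_mod_three_eq_one hF hs hm,
        (even_iff_two_dvd.2 hm2).neg_one_pow, one_add_one_eq_two]
  · have hdvd : ¬ 2 * nThree n ∣ n := mt dvd_of_mul_right_dvd h2
    rw [IfunD, IfunD, if_neg hdvd, if_neg hdvd, sub_self, mul_zero]
    exact not_not.1 (mt (hvanish n) h2)

theorem ncard_IrredSet_redei_of_card_mod_three_eq_two (hF : Fintype.card F % 3 = 2)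
    (hs : ¬ IsSquare s) {n : ℕ} (hn : n ≠ 0) :
    ((IrredSet (redeiNum s) (redeiDen s) n).ncard : ℚ) = 2 / (3 * nThree n) *
      (Ifun (n / nThree n) (Fintype.card F ^ nThree n) - Ifun (n / nThree n) (-1)) := by
  have hodd : Odd (nThree n) := Odd.pow (by decide)
  rw [eq_Ifun_sub_Ifun_of_sum_divisors_filter Nat.prime_three (Nat.coprime_one_left 3)
    (M := fun d ↦ (IrredSet (redeiNum s) (redeiDen s) d).ncard) (fun d _ ↦ one_dvd d)
    (fun m hm _ ↦ sum_ncard_IrredSet_redei_of_card_mod_three_eq_two hF hs hm) hn (one_dvd n)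
    (one_mul (nThree n)).symm, hodd.neg_one_pow, div_div]

end RedeiCount

/-- Theorem 9: counting monic irreducible `f` of degree `n > 1` over `F_q` (characteristic
at least five, `σ` a nonsquare) such that `f_R` is irreducible, for
`R(x) = (x³ + 3σx)/(3x² + σ)`. -/
theorem stmt9 {F : Type*} [Field F] [Fintype F] (q : ℕ) (hq : Fintype.card F = q)
    (hchar : 5 ≤ ringChar F) (σ : F) (hσ : ¬ IsSquare σ)
    (n : ℕ) (hn : 1 < n) :
    (q % 3 = 1 →
      ((IrredSet (X ^ 3 + C (3 * σ) * X) (C 3 * X ^ 2 + C σ) n).ncard : ℚ) =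
        (1 / (3 * (nThree n : ℚ))) *
          (IfunD n (2 * nThree n) ((q : ℚ) ^ (2 * nThree n)) - IfunD n (2 * nThree n) 1)) ∧
    (q % 3 = 2 →
      ((IrredSet (X ^ 3 + C (3 * σ) * X) (C 3 * X ^ 2 + C σ) n).ncard : ℚ) =
        (2 / (3 * (nThree n : ℚ))) *
          (Ifun (n / nThree n) ((q : ℚ) ^ nThree n) - Ifun (n / nThree n) (-1))) := by
  subst hq
  exact ⟨fun hq1 ↦ ncard_IrredSet_redei_of_card_mod_three_eq_one hq1 hσ (by lia),
    fun hq2 ↦ ncard_IrredSet_redei_of_card_mod_three_eq_two hq2 hσ (by lia)⟩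
end
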